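/- The assignment D ↦ φ̄_D, where φ̄_D([a ⊗ b^op]) = D(a)b, is an R-module isomorphism Diff^k(B) ≅ Hom_{B̄}(J^k(B), B), where Hom_{B̄}(J^k(B), B) denotes the R-module of R-linear maps φ̄ : J^k(B) → B satisfying φ̄((1 ⊗ c^op)·m) = φ̄(m)·c for all c ∈ B and m ∈ J^k(B), and B is viewed with its right regular multiplication. The inverse isomorphism sends φ̄ to the differential operator D_φ̄(a) := φ̄([a ⊗ 1^op]). -/

import Mathlib

open TensorProduct MulOpposite

/-- The universal differential `da = 1 ⊗ aᵒᵖ - a ⊗ 1` in `Bᵉ = B ⊗[R] Bᵐᵒᵖ`. -/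
noncomputable def duniv (R : Type*) {B : Type*} [CommRing R] [Ring B] [Algebra R B] (a : B) :
    B ⊗[R] Bᵐᵒᵖ :=
  (1 : B) ⊗ₜ[R] op a - a ⊗ₜ[R] (1 : Bᵐᵒᵖ)

/-- `δ_b`, as a linear endomorphism of `End_R(B)`: `δ_b(D)(a) = D(a) * b - D(a * b)`. -/
noncomputable def deltaL (R : Type*) {B : Type*} [CommRing R] [Ring B] [Algebra R B] (b : B) :
    (B →ₗ[R] B) →ₗ[R] (B →ₗ[R] B) :=
  LinearMap.llcomp R B B B (LinearMap.mulRight R b) - LinearMap.lcomp R B (LinearMap.mulRight R b)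

/-- The left ideal (here: `R`-submodule) `μ_k` of `Bᵉ`, spanned by all products
`(a ⊗ bᵒᵖ) · da₀ ⋯ da_k`. -/
noncomputable def muk (R : Type*) (B : Type*) [CommRing R] [Ring B] [Algebra R B] (k : ℕ) :
    Submodule R (B ⊗[R] Bᵐᵒᵖ) :=
  Submodule.span R
    {z | ∃ (a b : B) (f : Fin (k + 1) → B),
      z = (a ⊗ₜ[R] op b) * (List.ofFn fun i => duniv R (f i)).prod}

/-- The submodule `Diff^k(B)` of differential operators of order `k`. -/
noncomputable def Diffk (R : Type*) (B : Type*) [CommRing R] [Ring B] [Algebra R B] (k : ℕ) :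
    Submodule R (B →ₗ[R] B) :=
  ⨅ f : Fin (k + 1) → B,
    LinearMap.ker ((List.ofFn f).foldr (fun b L => deltaL R b ∘ₗ L) LinearMap.id)

/-- The submodule of right `B`-linear maps `J^k(B) → B`, i.e. `R`-linear maps `g`
with `g ((1 ⊗ cᵒᵖ)·m) = g m * c`. -/
noncomputable def HomBbar (R : Type*) (B : Type*) [CommRing R] [Ring B] [Algebra R B] (k : ℕ) :
    Submodule R (((B ⊗[R] Bᵐᵒᵖ) ⧸ muk R B k) →ₗ[R] B) where
  carrier := {g | ∀ (c : B) (z : B ⊗[R] Bᵐᵒᵖ),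
    g ((muk R B k).mkQ (((1 : B) ⊗ₜ[R] op c) * z)) = g ((muk R B k).mkQ z) * c}
  add_mem' := by
    intro g g' hg hg' c z
    simp only [LinearMap.add_apply, hg c z, hg' c z, add_mul]
  zero_mem' := by
    intro c z
    simp
  smul_mem' := by
    intro r g hg c z
    simp only [LinearMap.smul_apply, hg c z, smul_mul_assoc]

section JetPairing

variable {R B : Type*} [CommRing R] [Ring B] [Algebra R B]

/-- The `R`-linear map `φ_D : Bᵉ → B` with `φ_D (a ⊗ bᵒᵖ) = D a * b`. -/
noncomputable def jetPairing (D : B →ₗ[R] B) : B ⊗[R] Bᵐᵒᵖ →ₗ[R] B :=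
  LinearMap.mul' R B ∘ₗ TensorProduct.map D (opLinearEquiv R).symm.toLinearMap

@[simp]
theorem jetPairing_tmul (D : B →ₗ[R] B) (a : B) (b : Bᵐᵒᵖ) :
    jetPairing D (a ⊗ₜ[R] b) = D a * unop b := by
  simp [jetPairing]

@[simp]
theorem deltaL_apply (b : B) (D : B →ₗ[R] B) (a : B) :
    deltaL R b D a = D a * b - D (a * b) := by
  simp [deltaL]

theorem jetPairing_mul_duniv (D : B →ₗ[R] B) (b : B) (z : B ⊗[R] Bᵐᵒᵖ) :
    jetPairing D (z * duniv R b) = jetPairing (deltaL R b D) z := by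
  induction z with
  | zero => simp
  | add x y hx hy => rw [add_mul, map_add, map_add, hx, hy]
  | tmul a c => simp [duniv, mul_sub, sub_mul, mul_assoc]

theorem jetPairing_mul_prod_duniv (D : B →ₗ[R] B) (l : List B) (z : B ⊗[R] Bᵐᵒᵖ) :
    jetPairing D (z * (l.map (duniv R)).prod) =
      jetPairing (l.foldr (fun b L => deltaL R b ∘ₗ L) LinearMap.id D) z := by
  induction l generalizing z with
  | nil => simp
  | cons b l ih =>
    rw [List.map_cons, List.prod_cons, ← mul_assoc, ih, jetPairing_mul_duniv]
    rfl

theorem jetPairing_one_tmul_op_mul (D : B →ₗ[R] B) (c : B) (z : B ⊗[R] Bᵐᵒᵖ) :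
    jetPairing D (((1 : B) ⊗ₜ[R] op c) * z) = jetPairing D z * c := by
  induction z with
  | zero => simp
  | add x y hx hy => rw [mul_add, map_add, map_add, hx, hy, add_mul]
  | tmul a b => simp [mul_assoc]

theorem muk_le_ker_jetPairing_iff (k : ℕ) (D : B →ₗ[R] B) :
    muk R B k ≤ LinearMap.ker (jetPairing D) ↔ D ∈ Diffk R B k := by
  have key (f : Fin (k + 1) → B) (z : B ⊗[R] Bᵐᵒᵖ) :
      jetPairing D (z * (List.ofFn fun i => duniv R (f i)).prod) =
        jetPairing ((List.ofFn f).foldr (fun b L => deltaL R b ∘ₗ L) LinearMap.id D) z := by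
    rw [← jetPairing_mul_prod_duniv, List.map_ofFn]
    rfl
  simp only [Diffk, Submodule.mem_iInf, LinearMap.mem_ker]
  refine ⟨fun h f => LinearMap.ext fun a => ?_, fun h => Submodule.span_le.mpr ?_⟩
  · have hmem := h (Submodule.subset_span ⟨a, 1, f, rfl⟩)
    rw [LinearMap.mem_ker, key] at hmem
    simpa using hmem
  · rintro _ ⟨a, b, f, rfl⟩
    rw [SetLike.mem_coe, LinearMap.mem_ker, key, h f]
    simp

/-- A right `B`-linear functional on jets is the pairing with its operator
`a ↦ g [a ⊗ 1]`. -/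
theorem jetPairing_of_mem_HomBbar {k : ℕ} {g : ((B ⊗[R] Bᵐᵒᵖ) ⧸ muk R B k) →ₗ[R] B}
    (hg : g ∈ HomBbar R B k) :
    jetPairing (g ∘ₗ (muk R B k).mkQ ∘ₗ (TensorProduct.mk R B Bᵐᵒᵖ).flip 1) =
      g ∘ₗ (muk R B k).mkQ := by
  refine TensorProduct.ext' fun a b => ?_
  have h := hg (unop b) (a ⊗ₜ[R] 1)
  rw [Algebra.TensorProduct.tmul_mul_tmul, one_mul, mul_one, op_unop] at h
  rw [jetPairing_tmul]
  exact h.symm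

end JetPairing

theorem stmt3 {R B : Type*} [CommRing R] [Ring B] [Algebra R B] (k : ℕ) :
    ∃ e : Diffk R B k ≃ₗ[R] HomBbar R B k,
      (∀ (D : Diffk R B k) (a b : B),
        (e D : ((B ⊗[R] Bᵐᵒᵖ) ⧸ muk R B k) →ₗ[R] B) ((muk R B k).mkQ (a ⊗ₜ[R] op b)) =
          (D : B →ₗ[R] B) a * b) ∧
      (∀ (g : HomBbar R B k) (a : B),
        (e.symm g : B →ₗ[R] B) a =
          (g : ((B ⊗[R] Bᵐᵒᵖ) ⧸ muk R B k) →ₗ[R] B)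
            ((muk R B k).mkQ (a ⊗ₜ[R] (1 : Bᵐᵒᵖ)))) := by
  refine ⟨
    { toFun := fun D => ⟨(muk R B k).liftQ (jetPairing D.1)
        ((muk_le_ker_jetPairing_iff k D.1).mpr D.2), fun c z => ?_⟩
      invFun := fun g =>
        ⟨g.1 ∘ₗ (muk R B k).mkQ ∘ₗ (TensorProduct.mk R B Bᵐᵒᵖ).flip 1, ?_⟩
      map_add' := fun D D' => ?_
      map_smul' := fun r D => ?_
      left_inv := fun D => ?_
      right_inv := fun g => ?_ }, fun D a b => ?_, fun g a => rfl⟩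
  · simpa using jetPairing_one_tmul_op_mul D.1 c z
  · refine Subtype.ext (Submodule.linearMap_qext _ (TensorProduct.ext' fun a b => ?_))
    simp [add_mul]
  · refine Subtype.ext (Submodule.linearMap_qext _ (TensorProduct.ext' fun a b => ?_))
    simp
  · rw [← muk_le_ker_jetPairing_iff, jetPairing_of_mem_HomBbar g.2]
    intro z hz
    simp [(Submodule.Quotient.mk_eq_zero _).mpr hz]
  · refine Subtype.ext (LinearMap.ext fun a => ?_)
    simp
  · refine Subtype.ext (Submodule.linearMap_qext _ ?_)
    exact (Submodule.liftQ_mkQ _ _ _).trans (jetPairing_of_mem_HomBbar g.2)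
  · simp
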